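/- Let I_old : ℝ^m → ℝ and I_new : ℝ^M → ℝ be functions, let ∇̄I_new be a discrete gradient of I_new (i.e. (∇̄I_new(v,u))ᵀ(u−v) = I_new(u) − I_new(v) for all u,v ∈ ℝ^M), let S̄ ∈ Mat_{M×M}(ℝ) be skew-symmetric, let Δt ∈ ℝ, let u^n ∈ ℝ^m, û ∈ ℝ^M, and let z ∈ ℝ^M. If u^{n+1} ∈ ℝ^M satisfies ⟨∇̄I_new(û, u^{n+1}), z⟩ ≠ 0 together with the corrected adaptive scheme u^{n+1} = û − [(I_new(û) − I_old(u^n)) / ⟨∇̄I_new(û, u^{n+1}), z⟩] z + Δt S̄ ∇̄I_new(û, u^{n+1}), then I_new(u^{n+1}) = I_old(u^n); i.e., the corrected moving-mesh discrete gradient step exactly preserves the approximated first integral across the mesh change even when the transfer û of u^n to the new mesh is non-preserving. -/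

import Mathlib

/-!
Pair the scheme with the discrete gradient `g = ∇̄I_new(û, u^{n+1})`. The left side
`⟨g, u^{n+1} - û⟩` is `I_new(u^{n+1}) - I_new(û)`; on the right, the `S̄` term vanishes by
skew-symmetry and the correction term contributes exactly `-(I_new(û) - I_old(uⁿ))`.
-/

open Matrix

section

variable {ι R K : Type*} [Fintype ι]

theorem dotProduct_mulVec_self_eq_zero_of_transpose_eq_neg [CommRing R] [NoZeroDivisors R]
    [NeZero (2 : R)] {S : Matrix ι ι R} (hS : Sᵀ = -S) (g : ι → R) : g ⬝ᵥ (S *ᵥ g) = 0 := by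
  have eq_neg_self : g ⬝ᵥ (S *ᵥ g) = -(g ⬝ᵥ (S *ᵥ g)) :=
    calc g ⬝ᵥ (S *ᵥ g) = g ⬝ᵥ (Sᵀ *ᵥ g) := (dotProduct_transpose_mulVec S g g).symm
      _ = -(g ⬝ᵥ (S *ᵥ g)) := by rw [hS, neg_mulVec, dotProduct_neg]
  have two_mul_eq_zero : 2 * (g ⬝ᵥ (S *ᵥ g)) = 0 := by linear_combination eq_neg_self
  exact (mul_eq_zero.mp two_mul_eq_zero).resolve_left two_ne_zero

theorem dotProduct_sub_eq_neg_of_skew_step [CommRing R] [NoZeroDivisors R] [NeZero (2 : R)]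
    {S : Matrix ι ι R} (hS : Sᵀ = -S) {τ : R} {u u' g w : ι → R}
    (hstep : u' = u - w + τ • (S *ᵥ g)) : g ⬝ᵥ (u' - u) = -(g ⬝ᵥ w) := by
  have increment : u' - u = τ • (S *ᵥ g) - w := by rw [hstep]; abel
  rw [increment, dotProduct_sub, dotProduct_smul,
    dotProduct_mulVec_self_eq_zero_of_transpose_eq_neg hS, smul_zero, zero_sub]

theorem dotProduct_div_dotProduct_smul [Field K] {g z : ι → K} (hgz : g ⬝ᵥ z ≠ 0) (a : K) :
    g ⬝ᵥ ((a / (g ⬝ᵥ z)) • z) = a := by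
  rw [dotProduct_smul, smul_eq_mul, div_mul_cancel₀ a hgz]

theorem corrected_adaptive_scheme_preserves_integral_general {X : Type*} [Field K]
    [NeZero (2 : K)] (Iold : X → K) (Inew : (ι → K) → K) (DG : (ι → K) → (ι → K) → (ι → K))
    (hDG : ∀ v u : ι → K, DG v u ⬝ᵥ (u - v) = Inew u - Inew v)
    (S : Matrix ι ι K) (hS : Sᵀ = -S) (Δt : K) (un : X) (uhat z u1 : ι → K)
    (hnz : DG uhat u1 ⬝ᵥ z ≠ 0)
    (hscheme : u1 = uhat - ((Inew uhat - Iold un) / (DG uhat u1 ⬝ᵥ z)) • z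
        + Δt • (S *ᵥ DG uhat u1)) :
    Inew u1 = Iold un := by
  have integral_increment : Inew u1 - Inew uhat = -(Inew uhat - Iold un) :=
    calc Inew u1 - Inew uhat = DG uhat u1 ⬝ᵥ (u1 - uhat) := (hDG uhat u1).symm
      _ = -(DG uhat u1 ⬝ᵥ (((Inew uhat - Iold un) / (DG uhat u1 ⬝ᵥ z)) • z)) :=
        dotProduct_sub_eq_neg_of_skew_step hS hscheme
      _ = -(Inew uhat - Iold un) := by rw [dotProduct_div_dotProduct_smul hnz]
  linear_combination integral_increment

end

/-- The corrected adaptive (moving-mesh) discrete gradient scheme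
`u^{n+1} = û - [(I_new(û) - I_old(uⁿ)) / ⟨∇̄I_new(û, u^{n+1}), z⟩] z
          + Δt S̄ ∇̄I_new(û, u^{n+1})`
exactly preserves the approximated first integral across the mesh change:
`I_new(u^{n+1}) = I_old(uⁿ)`. -/
theorem corrected_adaptive_scheme_preserves_integral {m M : ℕ}
    (Iold : (Fin m → ℝ) → ℝ) (Inew : (Fin M → ℝ) → ℝ)
    (DG : (Fin M → ℝ) → (Fin M → ℝ) → (Fin M → ℝ))
    (hDG : ∀ v u : Fin M → ℝ, DG v u ⬝ᵥ (u - v) = Inew u - Inew v)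
    (S : Matrix (Fin M) (Fin M) ℝ) (hS : Sᵀ = -S)
    (Δt : ℝ) (un : Fin m → ℝ) (uhat z : Fin M → ℝ)
    (u1 : Fin M → ℝ)
    (hnz : DG uhat u1 ⬝ᵥ z ≠ 0)
    (hscheme : u1 = uhat - ((Inew uhat - Iold un) / (DG uhat u1 ⬝ᵥ z)) • z
        + Δt • (S *ᵥ DG uhat u1)) :
    Inew u1 = Iold un :=
  corrected_adaptive_scheme_preserves_integral_general Iold Inew DG hDG S hS Δt un uhat z u1
    hnz hscheme
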